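/- arXiv:0706.0615 — 2 statements merged into one kernel-verified Lean document; each statement's English description precedes it below -/
import Mathlib

section
/- Let Ω ⊆ ℝ⁴ be open, let u, v : Ω → ℝ be twice continuously differentiable, and let y ∈ ℝ⁴. Define the vector field X : Ω → ℝ⁴ by X(x) = ⟨x − y, ∇v(x)⟩·∇u(x) + ⟨x − y, ∇u(x)⟩·∇v(x) − ⟨∇u(x), ∇v(x)⟩·(x − y). Then for every x ∈ Ω, div X(x) = ⟨x − y, ∇v(x)⟩·Δu(x) + ⟨x − y, ∇u(x)⟩·Δv(x) − 2·⟨∇u(x), ∇v(x)⟩. -/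
/-!
By the product rule `div (f V) = f div V + df(V)`, with `z = x - y` the first two terms of the
field contribute `⟨z, ∇v⟩ Δu + ⟨z, ∇u⟩ Δv + 2 ⟨∇u, ∇v⟩` together with the Hessian terms
`D²v(∇u, z)` and `D²u(∇v, z)`. The third term contributes `-n ⟨∇u, ∇v⟩`, since `div z = n` is the
dimension, and the Hessian terms `-D²u(z, ∇v)` and `-D²v(z, ∇u)`. The Hessian terms cancel by
symmetry of second derivatives, which leaves the coefficient `2 - n` of `⟨∇u, ∇v⟩`.
-/

open scoped RealInnerProductSpace

noncomputable section

/-- The Laplacian of `f : ℝ⁴ → ℝ` at `x`: the trace of the second derivative. -/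
def lap (f : EuclideanSpace ℝ (Fin 4) → ℝ) (x : EuclideanSpace ℝ (Fin 4)) : ℝ :=
  ∑ i : Fin 4,
    fderiv ℝ (fun y => fderiv ℝ f y (EuclideanSpace.single i (1:ℝ))) x
      (EuclideanSpace.single i (1:ℝ))

/-- The divergence of a vector field `X : ℝ⁴ → ℝ⁴` at `x`: the trace of its derivative. -/
def divg (X : EuclideanSpace ℝ (Fin 4) → EuclideanSpace ℝ (Fin 4))
    (x : EuclideanSpace ℝ (Fin 4)) : ℝ :=
  ∑ i : Fin 4,
    ⟪EuclideanSpace.single i (1:ℝ), fderiv ℝ X x (EuclideanSpace.single i (1:ℝ))⟫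

open Module (finrank)
open scoped Gradient InnerProductSpace Laplacian

section Divergence

variable {𝕜 E : Type*} [NontriviallyNormedField 𝕜] [NormedAddCommGroup E] [NormedSpace 𝕜 E]

variable (𝕜) in
/-- The divergence of a vector field `X` at `x`: the basis-free form of `divg`, as the trace of the
derivative, on any normed space. It has the junk value `0` in infinite dimension and where `X` is
not differentiable. -/
def divergence (X : E → E) (x : E) : 𝕜 :=
  LinearMap.trace 𝕜 E (fderiv 𝕜 X x)

variable {X Y : E → E} {f : E → 𝕜} {x : E}

lemma divergence_fun_add (hX : DifferentiableAt 𝕜 X x) (hY : DifferentiableAt 𝕜 Y x) :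
    divergence 𝕜 (fun z => X z + Y z) x = divergence 𝕜 X x + divergence 𝕜 Y x := by
  simp [divergence, fderiv_fun_add hX hY]

lemma divergence_fun_sub (hX : DifferentiableAt 𝕜 X x) (hY : DifferentiableAt 𝕜 Y x) :
    divergence 𝕜 (fun z => X z - Y z) x = divergence 𝕜 X x - divergence 𝕜 Y x := by
  simp [divergence, fderiv_fun_sub hX hY]

lemma divergence_sub_const (y : E) [FiniteDimensional 𝕜 E] :
    divergence 𝕜 (fun z => z - y) x = finrank 𝕜 E := by
  simp [divergence, fderiv_sub_const]

lemma divergence_fun_smul [FiniteDimensional 𝕜 E]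
    (hf : DifferentiableAt 𝕜 f x) (hX : DifferentiableAt 𝕜 X x) :
    divergence 𝕜 (fun z => f z • X z) x = f x * divergence 𝕜 X x + fderiv 𝕜 f x (X x) := by
  simp [divergence, fderiv_fun_smul hf hX]

end Divergence

lemma divergence_inner_smul {E F : Type*} [NormedAddCommGroup E] [NormedSpace ℝ E]
    [FiniteDimensional ℝ E] [NormedAddCommGroup F] [InnerProductSpace ℝ F] {A B : E → F}
    {X : E → E} {x : E} (hA : DifferentiableAt ℝ A x) (hB : DifferentiableAt ℝ B x)
    (hX : DifferentiableAt ℝ X x) :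
    divergence ℝ (fun z => ⟪A z, B z⟫ • X z) x =
      ⟪A x, B x⟫ * divergence ℝ X x + (⟪A x, fderiv ℝ B x (X x)⟫ + ⟪fderiv ℝ A x (X x), B x⟫) := by
  rw [divergence_fun_smul (hA.inner ℝ hB) hX, fderiv_inner_apply ℝ hA hB]

lemma differentiableAt_fderiv_of_contDiffAt_two {𝕜 E F : Type*} [NontriviallyNormedField 𝕜]
    [NormedAddCommGroup E] [NormedSpace 𝕜 E] [NormedAddCommGroup F] [NormedSpace 𝕜 F]
    {f : E → F} {x : E} (hf : ContDiffAt 𝕜 2 f x) : DifferentiableAt 𝕜 (fderiv 𝕜 f) x :=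
  (hf.fderiv_right (m := 1) (by norm_num)).differentiableAt one_ne_zero

section Gradient

variable {E : Type*} [NormedAddCommGroup E] [InnerProductSpace ℝ E] [CompleteSpace E]
  {f : E → ℝ} {x : E}

lemma differentiableAt_gradient (hf : DifferentiableAt ℝ (fderiv ℝ f) x) :
    DifferentiableAt ℝ (∇ f) x :=
  let rieszInv : StrongDual ℝ E →L[ℝ] E :=
    (InnerProductSpace.toDual ℝ E).symm.toLinearIsometry.toContinuousLinearMap
  rieszInv.differentiableAt.comp x hf

lemma inner_fderiv_gradient_left (hf : DifferentiableAt ℝ (fderiv ℝ f) x) (a b : E) :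
    ⟪fderiv ℝ (∇ f) x a, b⟫ = fderiv ℝ (fderiv ℝ f) x a b := by
  calc
    ⟪fderiv ℝ (∇ f) x a, b⟫ = fderiv ℝ (fun z => ⟪∇ f z, b⟫) x a := by
      simp [fderiv_inner_apply ℝ (differentiableAt_gradient hf) (differentiableAt_const b),
        -inner_gradient_left]
    _ = fderiv ℝ (fun z => fderiv ℝ f z b) x a := by simp only [inner_gradient_left]
    _ = fderiv ℝ (fderiv ℝ f) x a b := by simp [fderiv_clm_apply hf (differentiableAt_const b)]

lemma inner_fderiv_gradient_right (hf : DifferentiableAt ℝ (fderiv ℝ f) x) (a b : E) :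
    ⟪a, fderiv ℝ (∇ f) x b⟫ = fderiv ℝ (fderiv ℝ f) x b a := by
  rw [real_inner_comm, inner_fderiv_gradient_left hf]

lemma isSymmetric_fderiv_gradient (hf : DifferentiableAt ℝ (fderiv ℝ f) x)
    (hsymm : IsSymmSndFDerivAt ℝ f x) :
    (fderiv ℝ (∇ f) x : E →ₗ[ℝ] E).IsSymmetric := by
  intro a b
  simp only [ContinuousLinearMap.coe_coe]
  rw [inner_fderiv_gradient_left hf, inner_fderiv_gradient_right hf, hsymm.eq]

end Gradient

section Pohozaev

variable {E : Type*} [NormedAddCommGroup E] [InnerProductSpace ℝ E]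

/-- The Pohozaev vector field `⟨x - y, G⟩ F + ⟨x - y, F⟩ G - ⟨F, G⟩ (x - y)` centred at `y`, for
arbitrary vector fields `F` and `G` in place of the gradients `∇u` and `∇v`. -/
def pohozaevField (y : E) (F G : E → E) : E → E := fun x =>
  ⟪x - y, G x⟫ • F x + ⟪x - y, F x⟫ • G x - ⟪F x, G x⟫ • (x - y)

variable [FiniteDimensional ℝ E] {x : E}

lemma divergence_gradient {f : E → ℝ} (hf : DifferentiableAt ℝ (fderiv ℝ f) x) :
    divergence ℝ (∇ f) x = Δ f x := by
  simp [divergence, LinearMap.trace_eq_sum_inner _ (stdOrthonormalBasis ℝ E),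
    InnerProductSpace.laplacian_eq_iteratedFDeriv_stdOrthonormalBasis, iteratedFDeriv_two_apply,
    inner_fderiv_gradient_right hf]

lemma divergence_pohozaevField {F G : E → E} (hF : DifferentiableAt ℝ F x)
    (hG : DifferentiableAt ℝ G x) (hF_symm : (fderiv ℝ F x : E →ₗ[ℝ] E).IsSymmetric)
    (hG_symm : (fderiv ℝ G x : E →ₗ[ℝ] E).IsSymmetric) (y : E) :
    divergence ℝ (pohozaevField y F G) x =
      ⟪x - y, G x⟫ * divergence ℝ F x + ⟪x - y, F x⟫ * divergence ℝ G x
        + (2 - finrank ℝ E) * ⟪F x, G x⟫ := by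
  have hz : DifferentiableAt ℝ (fun z => z - y) x := differentiableAt_id.sub_const y
  have hF_cancel : ⟪fderiv ℝ F x (x - y), G x⟫ = ⟪x - y, fderiv ℝ F x (G x)⟫ := hF_symm _ _
  have hG_cancel : ⟪F x, fderiv ℝ G x (x - y)⟫ = ⟪x - y, fderiv ℝ G x (F x)⟫ :=
    (hG_symm _ _).symm.trans (real_inner_comm _ _)
  have hGF := (hz.inner ℝ hG).fun_smul hF
  have hFG := (hz.inner ℝ hF).fun_smul hG
  unfold pohozaevField
  rw [divergence_fun_sub (hGF.fun_add hFG) ((hF.inner ℝ hG).fun_smul hz),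
    divergence_fun_add hGF hFG,
    divergence_inner_smul hz hG hF, divergence_inner_smul hz hF hG,
    divergence_inner_smul hF hG hz, divergence_sub_const, hF_cancel, hG_cancel]
  simp only [fderiv_sub_const, fderiv_fun_id, ContinuousLinearMap.id_apply,
    real_inner_comm (F x) (G x)]
  ring

theorem pohozaev_div_identity_uv_general {u v : E → ℝ} (hu : ContDiffAt ℝ 2 u x)
    (hv : ContDiffAt ℝ 2 v x) (y : E) :
    divergence ℝ (pohozaevField y (∇ u) (∇ v)) x =
      ⟪x - y, ∇ v x⟫ * Δ u x + ⟪x - y, ∇ u x⟫ * Δ v x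
        + (2 - finrank ℝ E) * ⟪∇ u x, ∇ v x⟫ := by
  have hdu := differentiableAt_fderiv_of_contDiffAt_two hu
  have hdv := differentiableAt_fderiv_of_contDiffAt_two hv
  rw [divergence_pohozaevField (differentiableAt_gradient hdu) (differentiableAt_gradient hdv)
      (isSymmetric_fderiv_gradient hdu (hu.isSymmSndFDerivAt (by simp)))
      (isSymmetric_fderiv_gradient hdv (hv.isSymmSndFDerivAt (by simp))),
    divergence_gradient hdu, divergence_gradient hdv]

end Pohozaev

lemma divg_eq_divergence (X : EuclideanSpace ℝ (Fin 4) → EuclideanSpace ℝ (Fin 4))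
    (x : EuclideanSpace ℝ (Fin 4)) : divg X x = divergence ℝ X x := by
  simp [divg, divergence, LinearMap.trace_eq_sum_inner _ (EuclideanSpace.basisFun (Fin 4) ℝ)]

lemma lap_eq_laplacian {f : EuclideanSpace ℝ (Fin 4) → ℝ} {x : EuclideanSpace ℝ (Fin 4)}
    (hf : DifferentiableAt ℝ (fderiv ℝ f) x) : lap f x = Δ f x := by
  simp [lap, fderiv_clm_apply hf, iteratedFDeriv_two_apply,
    InnerProductSpace.laplacian_eq_iteratedFDeriv_orthonormalBasis f
      (EuclideanSpace.basisFun (Fin 4) ℝ)]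

/-- Pohozaev-type divergence identity: for `u, v` of class `C²` on an open set `Ω ⊆ ℝ⁴` and
`X(x) = ⟨x−y, ∇v⟩∇u + ⟨x−y, ∇u⟩∇v − ⟨∇u, ∇v⟩(x−y)`, one has
`div X = ⟨x−y, ∇v⟩Δu + ⟨x−y, ∇u⟩Δv − 2⟨∇u, ∇v⟩` on `Ω`. -/
theorem pohozaev_div_identity_uv (Ω : Set (EuclideanSpace ℝ (Fin 4))) (hΩ : IsOpen Ω)
    (u v : EuclideanSpace ℝ (Fin 4) → ℝ)
    (hu : ContDiffOn ℝ 2 u Ω) (hv : ContDiffOn ℝ 2 v Ω)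
    (y : EuclideanSpace ℝ (Fin 4)) :
    ∀ x ∈ Ω,
      divg (fun x => ⟪x - y, gradient v x⟫ • gradient u x
          + ⟪x - y, gradient u x⟫ • gradient v x
          - ⟪gradient u x, gradient v x⟫ • (x - y)) x
        = ⟪x - y, gradient v x⟫ * lap u x + ⟪x - y, gradient u x⟫ * lap v x
          - 2 * ⟪gradient u x, gradient v x⟫ := by
  intro x hx
  have hux := hu.contDiffAt (hΩ.mem_nhds hx)
  have hvx := hv.contDiffAt (hΩ.mem_nhds hx)
  rw [divg_eq_divergence, lap_eq_laplacian (differentiableAt_fderiv_of_contDiffAt_two hux),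
    lap_eq_laplacian (differentiableAt_fderiv_of_contDiffAt_two hvx)]
  refine (pohozaev_div_identity_uv_general hux hvx y).trans ?_
  rw [finrank_euclideanSpace_fin]
  ring

end
end

section
/- Let B̄ be the closed unit ball of ℝ⁴. There exists a constant C > 0 such that for all distinct x, y ∈ B̄, Boggio's Green function satisfies |G(x,y)| ≤ C·log(2 + 1/‖x−y‖). -/
open Metric

noncomputable section

/-- Boggio's auxiliary quantity `[x,y] = √(‖x−y‖² + (1−‖x‖²)(1−‖y‖²))`. -/
def brkt (x y : EuclideanSpace ℝ (Fin 4)) : ℝ :=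
  Real.sqrt (‖x - y‖ ^ 2 + (1 - ‖x‖ ^ 2) * (1 - ‖y‖ ^ 2))

/-- Boggio's Green function of the bilaplacian with Dirichlet boundary conditions on the
unit ball of `ℝ⁴`. -/
def boggioG (x y : EuclideanSpace ℝ (Fin 4)) : ℝ :=
  (1 / (8 * Real.pi ^ 2)) * ∫ v in (1:ℝ)..(brkt x y / ‖x - y‖), (v ^ 2 - 1) / v ^ 3

/-!
The triangle inequality and `(a + b)² + (1 - a²)(1 - b²) = (1 + a b)²` give `[x,y] ≤ 1 + ‖x‖‖y‖`, so
on the closed unit ball the upper limit `[x,y]/‖x-y‖` of Boggio's integral lies between `1` and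
`2/‖x-y‖`. In the critical dimension the integrand is dominated by `1/v`, whence the integral is at
most `log (2/‖x-y‖)`.
-/

variable {E : Type*} [NormedAddCommGroup E]

/-- The bracket `[x,y]` of Boggio's formula, with any normed group in place of `ℝ⁴`. -/
def boggioBracket (x y : E) : ℝ :=
  √(‖x - y‖ ^ 2 + (1 - ‖x‖ ^ 2) * (1 - ‖y‖ ^ 2))

/-- The integral in Boggio's formula for the Dirichlet Green function of `(-Δ)^m` on the unit ball
in the critical dimension `2m`, without its normalising constant. It is indexed by `k = m - 1`, so
that no truncated subtraction occurs, and is defined on any normed group. -/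
def criticalBoggioIntegral (k : ℕ) (x y : E) : ℝ :=
  ∫ v in (1:ℝ)..(boggioBracket x y / ‖x - y‖), (v ^ 2 - 1) ^ k / v ^ (2 * k + 1)

lemma norm_sub_le_boggioBracket {x y : E} (hx : ‖x‖ ≤ 1) (hy : ‖y‖ ≤ 1) :
    ‖x - y‖ ≤ boggioBracket x y := by
  have hx' : 0 ≤ 1 - ‖x‖ ^ 2 := sub_nonneg.mpr (pow_le_one₀ (norm_nonneg x) hx)
  have hy' : 0 ≤ 1 - ‖y‖ ^ 2 := sub_nonneg.mpr (pow_le_one₀ (norm_nonneg y) hy)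
  exact Real.le_sqrt_of_sq_le (le_add_of_nonneg_right (mul_nonneg hx' hy'))

lemma boggioBracket_le_one_add_norm_mul_norm (x y : E) :
    boggioBracket x y ≤ 1 + ‖x‖ * ‖y‖ := by
  refine Real.sqrt_le_iff.mpr ⟨by positivity, ?_⟩
  calc ‖x - y‖ ^ 2 + (1 - ‖x‖ ^ 2) * (1 - ‖y‖ ^ 2)
      ≤ (‖x‖ + ‖y‖) ^ 2 + (1 - ‖x‖ ^ 2) * (1 - ‖y‖ ^ 2) := by gcongr; exact norm_sub_le x y
    _ = (1 + ‖x‖ * ‖y‖) ^ 2 := by ring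

lemma sq_sub_one_pow_div_pow_le_one_div (k : ℕ) {v : ℝ} (hv : 1 ≤ v) :
    (v ^ 2 - 1) ^ k / v ^ (2 * k + 1) ≤ 1 / v := by
  have hv₀ : 0 < v := zero_lt_one.trans_le hv
  calc (v ^ 2 - 1) ^ k / v ^ (2 * k + 1)
      ≤ (v ^ 2) ^ k / v ^ (2 * k + 1) := by
        gcongr
        · exact sub_nonneg.mpr (one_le_pow₀ hv)
        · exact sub_le_self _ zero_le_one
    _ = 1 / v := by rw [← pow_mul, pow_succ, div_mul_cancel_left₀ (pow_ne_zero _ hv₀.ne'), one_div]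

lemma abs_integral_sq_sub_one_pow_div_pow_le_log (k : ℕ) {R : ℝ} (hR : 1 ≤ R) :
    |∫ v in (1:ℝ)..R, (v ^ 2 - 1) ^ k / v ^ (2 * k + 1)| ≤ Real.log R := by
  have h₀ : (0:ℝ) ∉ Set.uIcc 1 R := Set.notMem_uIcc_of_lt zero_lt_one (zero_lt_one.trans_le hR)
  have norm_le_one_div : ∀ v ∈ Set.Ioc 1 R, ‖(v ^ 2 - 1) ^ k / v ^ (2 * k + 1)‖ ≤ 1 / v := by
    intro v hv
    have hsq : 0 ≤ v ^ 2 - 1 := sub_nonneg.mpr (one_le_pow₀ hv.1.le)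
    have hv₀ : 0 < v := zero_lt_one.trans hv.1
    rw [Real.norm_of_nonneg (by positivity)]
    exact sq_sub_one_pow_div_pow_le_one_div k hv.1.le
  calc |∫ v in (1:ℝ)..R, (v ^ 2 - 1) ^ k / v ^ (2 * k + 1)|
      ≤ ∫ v in (1:ℝ)..R, 1 / v :=
        intervalIntegral.norm_integral_le_of_norm_le hR (.of_forall norm_le_one_div)
          (intervalIntegral.intervalIntegrable_one_div
            (fun _ hv => ne_of_mem_of_not_mem hv h₀) continuousOn_id)
    _ = Real.log R := by rw [integral_one_div h₀, div_one]

lemma log_two_div_le_two_mul_log {d : ℝ} (hd : 0 < d) :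
    Real.log (2 / d) ≤ 2 * Real.log (2 + 1 / d) := by
  have two_div_le_sq : 2 / d ≤ (2 + 1 / d) ^ 2 :=
    calc 2 / d = 2 * (1 / d) := by ring
      _ ≤ (2 + 1 / d) ^ 2 := by nlinarith [one_div_pos.mpr hd]
  calc Real.log (2 / d) ≤ Real.log ((2 + 1 / d) ^ 2) :=
        Real.log_le_log (by positivity) two_div_le_sq
    _ = 2 * Real.log (2 + 1 / d) := by rw [Real.log_pow, Nat.cast_ofNat]

theorem boggioG_log_bound_general (k : ℕ) {x y : E} (hx : ‖x‖ ≤ 1) (hy : ‖y‖ ≤ 1) (hxy : x ≠ y) :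
    |criticalBoggioIntegral k x y| ≤ 2 * Real.log (2 + 1 / ‖x - y‖) := by
  have hd : 0 < ‖x - y‖ := norm_sub_pos_iff.mpr hxy
  have one_le_ratio : 1 ≤ boggioBracket x y / ‖x - y‖ :=
    (one_le_div hd).mpr (norm_sub_le_boggioBracket hx hy)
  have bracket_le_two : boggioBracket x y ≤ 2 := by
    linarith [boggioBracket_le_one_add_norm_mul_norm x y, mul_le_one₀ hx (norm_nonneg y) hy]
  calc |criticalBoggioIntegral k x y|
      ≤ Real.log (boggioBracket x y / ‖x - y‖) :=
        abs_integral_sq_sub_one_pow_div_pow_le_log k one_le_ratio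
    _ ≤ Real.log (2 / ‖x - y‖) := by gcongr
    _ ≤ 2 * Real.log (2 + 1 / ‖x - y‖) := log_two_div_le_two_mul_log hd

lemma boggioG_eq_mul_criticalBoggioIntegral (x y : EuclideanSpace ℝ (Fin 4)) :
    boggioG x y = 1 / (8 * Real.pi ^ 2) * criticalBoggioIntegral 1 x y := by
  simp only [boggioG, criticalBoggioIntegral, brkt, boggioBracket, pow_one, mul_one,
    Nat.reduceAdd]

/-- Logarithmic bound for Boggio's Green function on the closed unit ball:
`|G(x,y)| ≤ C log(2 + 1/‖x−y‖)`. -/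
theorem boggioG_log_bound :
    ∃ C > (0:ℝ), ∀ x ∈ closedBall (0 : EuclideanSpace ℝ (Fin 4)) 1,
      ∀ y ∈ closedBall (0 : EuclideanSpace ℝ (Fin 4)) 1, x ≠ y →
        |boggioG x y| ≤ C * Real.log (2 + 1 / ‖x - y‖) := by
  refine ⟨1 / (8 * Real.pi ^ 2) * 2, by positivity, fun x hx y hy hxy => ?_⟩
  rw [mem_closedBall_zero_iff] at hx hy
  rw [boggioG_eq_mul_criticalBoggioIntegral, abs_mul, abs_of_pos (by positivity), mul_assoc]
  gcongr
  exact boggioG_log_bound_general 1 hx hy hxy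

end
end
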